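/- arXiv:math/0305382 — 3 statements merged into one kernel-verified Lean document; each statement's English description precedes it below -/
import Mathlib

section
/- Let W̄ ⊆ ℤ^d be a subgroup of finite index and let M̄ := { u ∈ ℚ^d : ⟨u, v⟩ ∈ ℤ for all v ∈ W̄ } be its dual lattice, which contains ℤ^d. Let Q ⊆ M̄ be an additive submonoid and let ℂ[Q] be its monoid algebra over ℂ, with basis the formal monomials χ^u for u ∈ Q. Then ℤ^d acts on ℂ[Q] by ℂ-algebra automorphisms via v·χ^u := e^{2πi⟨u,v⟩}·χ^u, this action factors through the finite group ℤ^d/W̄, and the subalgebra of invariants of ℂ[Q] under this action is exactly the span of the monomials χ^u with u ∈ Q ∩ ℤ^d, i.e. the monoid algebra ℂ[Q ∩ ℤ^d]. -/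
/-!
The automorphism attached to `v ∈ ℤ^d` rescales each monomial `χ^u` by the character value
`e^{2πi⟨u,v⟩}`, so in coordinates it multiplies the `u`-th coefficient by that scalar
(`coeff_twist`). All assertions are thereby reduced to properties of the scalars:
additivity in `u` makes the map multiplicative, additivity in `v` gives an action, and
`e^{2πiq} = 1` exactly when `q` is an integer (`expPair_eq_one_iff`).
An element is invariant iff every `u` in its support has `⟨u,v⟩ ∈ ℤ` for all `v ∈ ℤ^d`, and testing
on the standard basis vectors shows that this means `u ∈ ℤ^d`.
-/

noncomputable section

/-- The character value `e^{2πi⟨u,v⟩}` for `u ∈ ℚ^d` and `v ∈ ℤ^d`. -/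
def expPair {d : ℕ} (u : Fin d → ℚ) (v : Fin d → ℤ) : ℂ :=
  Complex.exp (2 * (Real.pi : ℂ) * Complex.I * ((∑ i, u i * (v i : ℚ) : ℚ) : ℂ))

lemma expPair_eq_one_iff {d : ℕ} (u : Fin d → ℚ) (v : Fin d → ℤ) :
    expPair u v = 1 ↔ ∃ n : ℤ, ∑ i, u i * (v i : ℚ) = (n : ℚ) := by
  rw [expPair, Complex.exp_eq_one_iff]
  refine exists_congr fun n => ?_
  rw [mul_comm (n : ℂ), mul_right_inj' Complex.two_pi_I_ne_zero]
  exact_mod_cast Iff.rfl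

lemma expPair_zero_left {d : ℕ} (v : Fin d → ℤ) : expPair 0 v = 1 := by
  simp [expPair]

lemma expPair_zero_right {d : ℕ} (u : Fin d → ℚ) : expPair u 0 = 1 := by
  simp [expPair]

lemma expPair_add_left {d : ℕ} (u u' : Fin d → ℚ) (v : Fin d → ℤ) :
    expPair (u + u') v = expPair u v * expPair u' v := by
  simp only [expPair, ← Complex.exp_add, ← mul_add, ← Rat.cast_add, ← Finset.sum_add_distrib,
    Pi.add_apply, add_mul]

lemma expPair_add_right {d : ℕ} (u : Fin d → ℚ) (v w : Fin d → ℤ) :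
    expPair u (v + w) = expPair u v * expPair u w := by
  simp only [expPair, ← Complex.exp_add, ← mul_add, ← Rat.cast_add, ← Finset.sum_add_distrib,
    Pi.add_apply, Int.cast_add]

/-- The `ℂ`-algebra endomorphism `χ^u ↦ e^{2πi⟨u,v⟩} χ^u` of `ℂ[Q]`. -/
def twist {d : ℕ} (Q : AddSubmonoid (Fin d → ℚ)) (v : Fin d → ℤ) :
    AddMonoidAlgebra ℂ ↥Q →ₐ[ℂ] AddMonoidAlgebra ℂ ↥Q :=
  AddMonoidAlgebra.lift ℂ (AddMonoidAlgebra ℂ ↥Q) ↥Q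
    { toFun := fun u => AddMonoidAlgebra.single u.toAdd (expPair (u.toAdd : Fin d → ℚ) v)
      map_one' := by
        simp [expPair_zero_left, AddMonoidAlgebra.one_def]
      map_mul' := fun a b => by
        simp [expPair_add_left, AddMonoidAlgebra.single_mul_single] }

lemma twist_single {d : ℕ} (Q : AddSubmonoid (Fin d → ℚ)) (v : Fin d → ℤ) (u : ↥Q) (c : ℂ) :
    twist Q v (AddMonoidAlgebra.single u c) =
      AddMonoidAlgebra.single u (c * expPair (u : Fin d → ℚ) v) := by
  simp [twist, AddMonoidAlgebra.lift_single]

lemma coeff_twist {d : ℕ} (Q : AddSubmonoid (Fin d → ℚ)) (v : Fin d → ℤ)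
    (x : AddMonoidAlgebra ℂ ↥Q) (u : ↥Q) :
    (twist Q v x).coeff u = x.coeff u * expPair (u : Fin d → ℚ) v := by
  classical
  induction x using AddMonoidAlgebra.induction_linear with
  | zero => simp
  | add f g hf hg => simp [hf, hg, add_mul]
  | single a c =>
    rw [twist_single, AddMonoidAlgebra.coeff_single, AddMonoidAlgebra.coeff_single,
      Finsupp.single_apply, Finsupp.single_apply]
    split_ifs with h
    · rw [h]
    · simp

lemma twist_add {d : ℕ} (Q : AddSubmonoid (Fin d → ℚ)) (v w : Fin d → ℤ) :
    twist Q (v + w) = (twist Q v).comp (twist Q w) := by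
  refine AlgHom.ext fun x => ?_
  apply AddMonoidAlgebra.ext
  ext u
  rw [AlgHom.comp_apply, coeff_twist, coeff_twist, coeff_twist, expPair_add_right]
  ring

lemma twist_eq_id {d : ℕ} (Q : AddSubmonoid (Fin d → ℚ)) (v : Fin d → ℤ)
    (h : ∀ u ∈ Q, expPair u v = 1) : twist Q v = AlgHom.id ℂ _ := by
  refine AlgHom.ext fun x => ?_
  apply AddMonoidAlgebra.ext
  ext u
  rw [coeff_twist, h u u.2, mul_one, AlgHom.id_apply]

/-- `twist Q v` as an automorphism, with inverse `twist Q (-v)`. -/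
def twistEquiv {d : ℕ} (Q : AddSubmonoid (Fin d → ℚ)) (v : Fin d → ℤ) :
    AddMonoidAlgebra ℂ ↥Q ≃ₐ[ℂ] AddMonoidAlgebra ℂ ↥Q :=
  AlgEquiv.ofAlgHom (twist Q v) (twist Q (-v))
    (by rw [← twist_add, add_neg_cancel]; exact twist_eq_id Q 0 fun u _ => expPair_zero_right u)
    (by rw [← twist_add, neg_add_cancel]; exact twist_eq_id Q 0 fun u _ => expPair_zero_right u)

lemma twistEquiv_apply {d : ℕ} (Q : AddSubmonoid (Fin d → ℚ)) (v : Fin d → ℤ)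
    (x : AddMonoidAlgebra ℂ ↥Q) : twistEquiv Q v x = twist Q v x := rfl

/-- `ℤ^d` is self-dual: pairing with the standard basis vectors reads off the coordinates of `u`. -/
lemma forall_expPair_eq_one_iff {d : ℕ} (u : Fin d → ℚ) :
    (∀ v : Fin d → ℤ, expPair u v = 1) ↔ ∀ i, ∃ n : ℤ, u i = (n : ℚ) := by
  simp only [expPair_eq_one_iff]
  constructor
  · intro h i
    obtain ⟨n, hn⟩ := h (Pi.single i 1)
    refine ⟨n, ?_⟩
    rw [← hn, Finset.sum_eq_single i]
    · simp
    · intro j _ hj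
      simp [Pi.single_eq_of_ne hj]
    · simp
  · intro h v
    choose n hn using h
    exact ⟨∑ i, n i * v i, by simp [hn]⟩

lemma forall_twist_eq_iff {d : ℕ} (Q : AddSubmonoid (Fin d → ℚ)) (x : AddMonoidAlgebra ℂ ↥Q) :
    (∀ v, twist Q v x = x) ↔
      ∀ u ∈ x.coeff.support, ∀ i, ∃ n : ℤ, (u : Fin d → ℚ) i = (n : ℚ) := by
  constructor
  · intro h u hu
    refine (forall_expPair_eq_one_iff _).1 fun v => ?_
    have h1 := coeff_twist Q v x u
    rw [h v] at h1
    exact (mul_eq_left₀ (Finsupp.mem_support_iff.1 hu)).1 h1.symm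
  · intro h v
    apply AddMonoidAlgebra.ext
    ext u
    rw [coeff_twist]
    by_cases hu : x.coeff u = 0
    · simp [hu]
    · rw [(forall_expPair_eq_one_iff _).2 (h u (Finsupp.mem_support_iff.2 hu)) v, mul_one]

/-- algebraic content of Proposition 4.1. Let `W̄ ⊆ ℤ^d` be a subgroup of
finite index, `M̄ = {u ∈ ℚ^d : ⟨u,v⟩ ∈ ℤ ∀ v ∈ W̄}` its dual lattice, and `Q ⊆ M̄` an additive
submonoid. Then `M̄` contains `ℤ^d`, and `ℤ^d` acts on the monoid algebra `ℂ[Q]` by `ℂ`-algebra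
automorphisms via `v·χ^u = e^{2πi⟨u,v⟩}·χ^u`; this action is trivial on `W̄` (so it factors
through the finite group `ℤ^d/W̄`), and the invariant subalgebra is exactly the span of the
monomials `χ^u` with `u ∈ Q ∩ ℤ^d`, i.e. the monoid algebra `ℂ[Q ∩ ℤ^d]`. -/
theorem statement5 (d : ℕ) (hd : 1 ≤ d) (Wbar : AddSubgroup (Fin d → ℤ))
    (hW : Wbar.FiniteIndex)
    (Q : AddSubmonoid (Fin d → ℚ))
    (hQ : ∀ u ∈ Q, ∀ v ∈ Wbar, ∃ n : ℤ, ∑ i, u i * (v i : ℚ) = (n : ℚ)) :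
    (∀ x : Fin d → ℤ, ∀ v ∈ Wbar, ∃ n : ℤ, ∑ i, (x i : ℚ) * (v i : ℚ) = (n : ℚ)) ∧
    ∃ ρ : (Fin d → ℤ) → (AddMonoidAlgebra ℂ ↥Q ≃ₐ[ℂ] AddMonoidAlgebra ℂ ↥Q),
      (∀ v w : Fin d → ℤ, ρ (v + w) = ρ v * ρ w) ∧
      (∀ (v : Fin d → ℤ) (u : ↥Q),
        ρ v (AddMonoidAlgebra.single u 1) =
          Complex.exp (2 * (Real.pi : ℂ) * Complex.I *
              ((∑ i, (u : Fin d → ℚ) i * (v i : ℚ) : ℚ) : ℂ)) •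
            AddMonoidAlgebra.single u 1) ∧
      (∀ v ∈ Wbar, ρ v = 1) ∧
      {x : AddMonoidAlgebra ℂ ↥Q | ∀ v : Fin d → ℤ, ρ v x = x} =
        ↑(Submodule.span ℂ {x : AddMonoidAlgebra ℂ ↥Q |
          ∃ u : ↥Q, (∀ i, ∃ n : ℤ, (u : Fin d → ℚ) i = (n : ℚ)) ∧
            x = AddMonoidAlgebra.single u 1}) := by
  refine ⟨fun x v _ => ⟨∑ i, x i * v i, by push_cast; rfl⟩, twistEquiv Q, ?_, ?_, ?_, ?_⟩
  · intro v w
    ext x : 1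
    rw [AlgEquiv.mul_apply, twistEquiv_apply, twistEquiv_apply, twistEquiv_apply, twist_add,
      AlgHom.comp_apply]
  · intro v u
    rw [twistEquiv_apply, twist_single, AddMonoidAlgebra.smul_single, one_mul, smul_eq_mul, mul_one,
      expPair]
  · intro v hv
    ext x : 1
    rw [twistEquiv_apply, twist_eq_id Q v fun u hu => (expPair_eq_one_iff u v).2 (hQ u hu v hv)]
    rfl
  · have hset : {x : AddMonoidAlgebra ℂ ↥Q |
          ∃ u : ↥Q, (∀ i, ∃ n : ℤ, (u : Fin d → ℚ) i = (n : ℚ)) ∧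
            x = AddMonoidAlgebra.single u 1} =
        (fun u => AddMonoidAlgebra.single u 1) ''
          {u : ↥Q | ∀ i, ∃ n : ℤ, (u : Fin d → ℚ) i = (n : ℚ)} := by
      ext x
      simp only [Set.mem_ofPred_eq, Set.mem_image, eq_comm (a := x)]
    ext x
    rw [hset, ← AddMonoidAlgebra.supported_eq_span_single, SetLike.mem_coe,
      AddMonoidAlgebra.mem_supported, Set.mem_ofPred_eq]
    exact forall_twist_eq_iff Q x
end
end

section
/- Let ψ : ℝ^d → ℝ^e be an injective linear map with ψ(ℝ₊^d) ⊆ ℝ₊^e, where ℝ₊^d and ℝ₊^e denote the nonnegative orthants, and let S ⊆ ℝ^d be any subset. Then every extreme point of the convex hull of ψ(S) + ℝ₊^e is the image under ψ of an extreme point of the convex hull of S + ℝ₊^d. -/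
open scoped Pointwise

/-!
An extreme point `y` of `conv(ψ(S) + ℝ₊^e)` lies in `ψ(S) + ℝ₊^e`, say `y = ψ s + c`. As `y` is the
midpoint of `ψ s` and `ψ s + 2c`, extremality gives `y = ψ s`. Since `ψ` maps `conv(S + ℝ₊^d)` into
`conv(ψ(S) + ℝ₊^e)`, a segment in the former around `s` maps to a segment in the latter around `y`,
hence to the point `y`, and injectivity collapses the original segment.
-/

/-- convex-geometric content of Lemma 4.4. Let `ψ : ℝ^d → ℝ^e` be an injective
linear map with `ψ(ℝ₊^d) ⊆ ℝ₊^e`, and let `S ⊆ ℝ^d`. Then every extreme point of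
`conv(ψ(S) + ℝ₊^e)` is the image under `ψ` of an extreme point of `conv(S + ℝ₊^d)`. -/
theorem statement6 (d e : ℕ) (ψ : (Fin d → ℝ) →ₗ[ℝ] (Fin e → ℝ))
    (hinj : Function.Injective ψ)
    (horth : ∀ x : Fin d → ℝ, (∀ i, 0 ≤ x i) → ∀ j, 0 ≤ ψ x j)
    (S : Set (Fin d → ℝ)) :
    ∀ y ∈ (convexHull ℝ ((⇑ψ '' S) + {x : Fin e → ℝ | ∀ j, 0 ≤ x j})).extremePoints ℝ,
      ∃ x ∈ (convexHull ℝ (S + {x : Fin d → ℝ | ∀ i, 0 ≤ x i})).extremePoints ℝ, y = ψ x := by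
  intro y hy
  have hyS := extremePoints_convexHull_subset hy
  rw [mem_extremePoints_iff_left] at hy
  obtain ⟨-, hy⟩ := hy
  obtain ⟨_, ⟨s, hs, rfl⟩, c, hc, rfl⟩ := hyS
  simp only [Set.mem_setOf_eq] at hc
  have hys : ψ s = ψ s + c := by
    refine hy (ψ s) (subset_convexHull ℝ _ ⟨ψ s, ⟨s, hs, rfl⟩, 0, fun _ => le_rfl, add_zero _⟩)
      (ψ s + (2 : ℝ) • c) (subset_convexHull ℝ _ ⟨ψ s, ⟨s, hs, rfl⟩, (2 : ℝ) • c, ?_, rfl⟩)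
      ⟨1 / 2, 1 / 2, by norm_num, by norm_num, by norm_num, by module⟩
    intro j
    have := hc j
    simp only [Pi.smul_apply, smul_eq_mul]
    positivity
  have hmap : ∀ a ∈ convexHull ℝ (S + {x : Fin d → ℝ | ∀ i, 0 ≤ x i}),
      ψ a ∈ convexHull ℝ ((⇑ψ '' S) + {x : Fin e → ℝ | ∀ j, 0 ≤ x j}) := by
    intro a ha
    have h := Set.mem_image_of_mem ψ ha
    rw [ψ.image_convexHull] at h
    refine convexHull_mono ?_ h
    rintro _ ⟨_, ⟨t, ht, u, hu, rfl⟩, rfl⟩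
    exact ⟨ψ t, ⟨t, ht, rfl⟩, ψ u, horth u hu, (map_add ψ t u).symm⟩
  refine ⟨s, mem_extremePoints_iff_left.2 ⟨subset_convexHull ℝ _
    ⟨s, hs, 0, fun _ => le_rfl, add_zero _⟩, ?_⟩, hys.symm⟩
  rintro a ha b hb ⟨p, q, hp, hq, hpq, hab⟩
  apply hinj
  rw [hys]
  refine hy _ (hmap a ha) _ (hmap b hb) ⟨p, q, hp, hq, hpq, ?_⟩
  dsimp only
  rw [← hys, ← hab, map_add, map_smul, map_smul]
end

section
/- Let c ≥ 1, G ≥ 1, and let ᾱ₁, ᾱ₂, …, ᾱ_G ∈ ℚ₊^c be vectors with nonnegative rational coordinates satisfying ᾱ₁ ≤ ᾱ₂ ≤ ⋯ ≤ ᾱ_G for the componentwise order, and such that for each k ∈ {1,…,G}, ᾱ_k does not belong to the subgroup ℤ^c + ℤᾱ₁ + ⋯ + ℤᾱ_{k−1} of ℚ^c. For 0 ≤ k ≤ G define the additive semigroup Γ_k := ℕ^c + ℕᾱ₁ + ⋯ + ℕᾱ_k ⊆ ℚ₊^c. Then for each k ∈ {1,…,G}: ᾱ_k belongs to Γ_G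 but not to Γ_{k−1}, and every element of Γ_G not belonging to Γ_{k−1} is ≥ ᾱ_k componentwise; consequently ᾱ_k is the unique smallest element of Γ_G not contained in Γ_{k−1}. -/
/-!
Non-membership of `abar k` in `Γ_k` is the group hypothesis restricted to nonnegative coefficients.
For minimality, write `x ∈ Γ_G` as a nonnegative combination of the generators. If `x ∉ Γ_k`, some
`abar j` with `j ≥ k` occurs with coefficient at least `1`; as all terms are nonnegative,
`abar k ≤ abar j ≤ x`. Indices start at `0`, so `abar k` is `ᾱ_{k+1}`.
-/

noncomputable section

/-- The semigroup `Γ_k = ℕ^c + ℕᾱ₁ + ⋯ + ℕᾱ_k ⊆ ℚ₊^c` (here `abar j`, `j < k`, are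
`ᾱ₁,…,ᾱ_k`). -/
def GammaSet (c : ℕ) (abar : ℕ → Fin c → ℚ) (k : ℕ) : Set (Fin c → ℚ) :=
  {x | ∃ v : Fin c → ℕ, ∃ i : ℕ → ℕ,
    x = (fun t => (v t : ℚ)) + ∑ j ∈ Finset.range k, (i j : ℚ) • abar j}

/-- combinatorial core of Lemma 12.4. Let `ᾱ₁ ≤ ⋯ ≤ ᾱ_G ∈ ℚ₊^c`
(componentwise) be such that `ᾱ_k ∉ ℤ^c + ℤᾱ₁ + ⋯ + ℤᾱ_{k−1}` for each `k`. Then `ᾱ_k` belongs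
to `Γ_G` but not to `Γ_{k−1}`, and every element of `Γ_G` not in `Γ_{k−1}` is ≥ `ᾱ_k`
componentwise; so `ᾱ_k` is the unique smallest element of `Γ_G` not contained in `Γ_{k−1}`. -/
theorem statement14 (c G : ℕ) (hc : 1 ≤ c) (hG : 1 ≤ G)
    (abar : ℕ → Fin c → ℚ)
    (hnonneg : ∀ k < G, ∀ i, 0 ≤ abar k i)
    (hmono : ∀ k l, k ≤ l → l < G → abar k ≤ abar l)
    (hgrp : ∀ k < G, ¬ ∃ (v : Fin c → ℤ) (i : ℕ → ℤ),
      abar k = (fun t => (v t : ℚ)) + ∑ j ∈ Finset.range k, (i j : ℚ) • abar j) :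
    ∀ k < G, abar k ∈ GammaSet c abar G ∧ abar k ∉ GammaSet c abar k ∧
      ∀ x ∈ GammaSet c abar G, x ∉ GammaSet c abar k → abar k ≤ x := by
  intro k hk
  refine ⟨⟨0, Pi.single k 1, ?_⟩, ?_, ?_⟩
  · ext t
    simp [Pi.single_apply, hk]
  · rintro ⟨v, i, h⟩
    exact hgrp k hk ⟨fun t => v t, fun j => i j, by simpa using h⟩
  · rintro x ⟨v, i, rfl⟩ hx
    have hj : ∃ j, k ≤ j ∧ j < G ∧ i j ≠ 0 := by
      by_contra! hcon
      refine hx ⟨v, i, ?_⟩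
      congr 1
      refine (Finset.sum_subset (Finset.range_mono hk.le) fun j hjG hjk => ?_).symm
      simp only [Finset.mem_range, not_lt] at hjG hjk
      simp [hcon j hjk hjG]
    obtain ⟨j, hkj, hjG, hij⟩ := hj
    have hone : (1 : ℚ) ≤ i j := by exact_mod_cast Nat.one_le_iff_ne_zero.mpr hij
    calc abar k ≤ abar j := hmono k j hkj hjG
      _ ≤ (i j : ℚ) • abar j := fun t => le_mul_of_one_le_left (hnonneg j hjG t) hone
      _ ≤ ∑ l ∈ Finset.range G, (i l : ℚ) • abar l :=
        Finset.single_le_sum (f := fun l => (i l : ℚ) • abar l)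
          (fun l hl t => mul_nonneg (Nat.cast_nonneg _) (hnonneg l (Finset.mem_range.mp hl) t))
          (Finset.mem_range.mpr hjG)
      _ ≤ _ := le_add_of_nonneg_left fun t => Nat.cast_nonneg (v t)
end
end
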